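/- Let g be a seven-dimensional real Lie algebra with a six-dimensional abelian ideal u, let e₇ ∈ g∖u, and let ω ∈ Λ²u* be a nondegenerate two-form on u. Then g admits a cocalibrated G₂-structure — i.e. there exists a closed four-form Ψ ∈ Λ⁴g* such that for some basis f¹,…,f⁷ of g*, Ψ = f^{1234}+f^{1256}+f^{3456}−f^{2467}+f^{2357}+f^{1457}+f^{1367} — if and only if ad(e₇)|_u ∈ End(u) is similar under GL(u) to an element of sp(u,ω), i.e. there exists g ∈ GL(u) with g∘(ad(e₇)|_u)∘g⁻¹ ∈ sp(u,ω). -/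

import Mathlib

open Module

section AltMachinery

variable {F : Type*} [Field F] {V : Type*} [AddCommGroup V] [Module F V]

/-- The wedge `φ₁ ∧ … ∧ φ_m` of `m` covectors, as an alternating `m`-form on `V`:
`(φ₁ ∧ … ∧ φ_m)(v₁,…,v_m) = det (φ_i (v_j))`. -/
noncomputable def wedgeCov (m : ℕ) (φ : Fin m → Module.Dual F V) :
    V [⋀^Fin m]→ₗ[F] F :=
  (Matrix.detRowAlternating : (Fin m → F) [⋀^Fin m]→ₗ[F] F).compLinearMap
    (LinearMap.pi φ)

/-- A decomposable alternating `m`-form: a wedge of `m` covectors. -/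
def AltDec (m : ℕ) (X : V [⋀^Fin m]→ₗ[F] F) : Prop :=
  ∃ φ : Fin m → Module.Dual F V, X = wedgeCov m φ

/-- The `m`-form `X` is a sum of `l` decomposable `m`-forms. -/
def AltLenLE (m l : ℕ) (X : V [⋀^Fin m]→ₗ[F] F) : Prop :=
  ∃ Y : Fin l → (V [⋀^Fin m]→ₗ[F] F), (∀ i, AltDec m (Y i)) ∧ X = ∑ i, Y i

/-- The `m`-form `X` has length `l`: it is a sum of `l` decomposable `m`-forms and of no
smaller number of them. -/
def AltHasLen (m l : ℕ) (X : V [⋀^Fin m]→ₗ[F] F) : Prop :=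
  AltLenLE m l X ∧ ∀ j < l, ¬ AltLenLE m j X

end AltMachinery

section CE

variable {F : Type*} [Field F] {g : Type*} [LieRing g] [LieAlgebra F g]

/-- The Chevalley–Eilenberg differential of a `(k+1)`-form (given as a function on tuples):
`(dρ)(x₀,…,x_{k+1}) = ∑_{i<j} (-1)^{i+j} ρ(⁅x_i,x_j⁆, x₀,…,x̂_i,…,x̂_j,…,x_{k+1})`. -/
noncomputable def ceDiff (k : ℕ) (ρ : (Fin (k + 1) → g) → F) : (Fin (k + 2) → g) → F :=
  fun x => ∑ i : Fin (k + 2), ∑ j : Fin (k + 2),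
    if h : (i : ℕ) < (j : ℕ) then
      (-1 : F) ^ ((i : ℕ) + (j : ℕ)) *
        ρ (Fin.cons ⁅x i, x j⁆ fun l : Fin k =>
            x (j.succAbove ((⟨(i : ℕ),
              Nat.lt_of_lt_of_le h (Nat.lt_succ_iff.mp j.isLt)⟩ : Fin (k + 1)).succAbove l)))
    else 0

end CE

section G2Forms

variable {F : Type*} [Field F] {g : Type*} [AddCommGroup g] [Module F g]

/-- The wedge `f^i ∧ f^j ∧ f^k ∧ f^l` of four covectors from the basis `b` of `g*`. -/
noncomputable def bw (b : Basis (Fin 7) F (Module.Dual F g)) (i j k l : Fin 7) :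
    g [⋀^Fin 4]→ₗ[F] F :=
  wedgeCov 4 ![b i, b j, b k, b l]

/-- The four-form `f^{1234}+f^{1256}+f^{3456}-f^{2467}+f^{2357}+f^{1457}+f^{1367}` (the
Hodge dual of a `G₂`- resp. `(G₂)_ℂ`-structure), written with `0`-based indices. -/
noncomputable def stdG2 (b : Basis (Fin 7) F (Module.Dual F g)) : g [⋀^Fin 4]→ₗ[F] F :=
  bw b 0 1 2 3 + bw b 0 1 4 5 + bw b 2 3 4 5 - bw b 1 3 5 6 +
    bw b 1 2 4 6 + bw b 0 3 4 6 + bw b 0 2 5 6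

/-- The four-form `f^{1234}-f^{1256}-f^{3456}-f^{2467}+f^{2357}+f^{1457}+f^{1367}` (the
Hodge dual of a `G₂*`-structure), written with `0`-based indices. -/
noncomputable def stdG2star (b : Basis (Fin 7) F (Module.Dual F g)) :
    g [⋀^Fin 4]→ₗ[F] F :=
  bw b 0 1 2 3 - bw b 0 1 4 5 - bw b 2 3 4 5 - bw b 1 3 5 6 +
    bw b 1 2 4 6 + bw b 0 3 4 6 + bw b 0 2 5 6

/-- Membership in `Λ⁴W ⊆ Λ⁴g*` for a subspace `W ⊆ g*`: the span of the wedges of four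
covectors from `W`. -/
def mem4Pow (W : Submodule F (Module.Dual F g)) (Ω : g [⋀^Fin 4]→ₗ[F] F) : Prop :=
  Ω ∈ Submodule.span F
    {Y : g [⋀^Fin 4]→ₗ[F] F |
      ∃ φ : Fin 4 → Module.Dual F g, (∀ i, φ i ∈ W) ∧ Y = wedgeCov 4 φ}

end G2Forms

open Matrix
open LinearMap (BilinForm)

/-!
Choose `α` with kernel `u` and `α e₇ = 1`. Since `u` is abelian, `⁅x, y⁆ = α x • D y - α y • D x`
with `D = ad e₇`, hence `dΨ = -α ∧ D·Ψ`. For `Ψ` of type `stdG2`, let `α♯` be the vector dual to `α`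
for the inner product `∑ fⁱ ⊗ fⁱ`, and let `ω = ι_{α♯} φ`, where `φ` is the three-form with Hodge
dual `Ψ`. Then `|α|² Ψ = ½ ω ∧ ω + α ∧ ι_{α♯} Ψ`, so that `|α|² D·Ψ ≡ (D·ω) ∧ ω` modulo `α`. On the
six-dimensional space `u` the form `ω` is symplectic and wedging two-forms with it is injective;
thus `Ψ` is closed iff `D·ω` vanishes on `u`, that is, iff `ad e₇|_u ∈ sp(u, ω)`. Finally all
symplectic forms on `u` are equivalent under `GL(u)`, and each of them arises as `ω` for an adapted
basis.
-/

/-! ### Symplectic bases -/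

section Symplectic

variable {K V W ι : Type*} [Field K] [AddCommGroup V] [Module K V]
  [AddCommGroup W] [Module K W]

/-- `v` is a standard symplectic family for `B`: its Gram matrix is `Matrix.J`, so that
`B (v (inl i)) (v (inr i)) = -1`. -/
def IsSymplecticFamily [DecidableEq ι] (B : BilinForm K V) (v : ι ⊕ ι → V) : Prop :=
  ∀ s t, B (v s) (v t) = J ι K s t

namespace IsSymplecticFamily

section Gram

variable [DecidableEq ι] {B : BilinForm K V} {v : ι ⊕ ι → V}

theorem eq_zero_of_apply_sum_eq_zero [Fintype ι] (hv : IsSymplecticFamily B v) {g : ι ⊕ ι → K}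
    (hg : ∀ s, B (v s) (∑ t, g t • v t) = 0) : g = 0 := by
  refine eq_zero_of_mulVec_eq_zero (isUnit_det_J ι K).ne_zero <| funext fun s ↦ ?_
  simpa [mulVec, dotProduct, hv s, mul_comm] using hg s

theorem linearIndependent [Finite ι] (hv : IsSymplecticFamily B v) : LinearIndependent K v := by
  cases nonempty_fintype ι
  refine Fintype.linearIndependent_iff.2 fun g hg ↦
    congrFun <| hv.eq_zero_of_apply_sum_eq_zero fun s ↦ ?_
  rw [hg, map_zero]

theorem isCompl_span_orthogonal [Finite ι] [FiniteDimensional K V] (hB : B.IsAlt)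
    (hv : IsSymplecticFamily B v) :
    IsCompl (Submodule.span K (Set.range v)) (B.orthogonal (Submodule.span K (Set.range v))) := by
  cases nonempty_fintype ι
  rw [BilinForm.isCompl_orthogonal_iff_disjoint hB.isRefl, Submodule.disjoint_def]
  intro x hx hx'
  obtain ⟨g, rfl⟩ := Submodule.mem_span_range_iff_exists_fun K |>.1 hx
  simp [hv.eq_zero_of_apply_sum_eq_zero fun s ↦ hx' _ (Submodule.subset_span ⟨s, rfl⟩)]

end Gram

theorem exists_succ [FiniteDimensional K V] {n : ℕ} {B : BilinForm K V} {v : Fin n ⊕ Fin n → V}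
    (hB : B.IsAlt) (hsep : B.SeparatingLeft) (hv : IsSymplecticFamily B v)
    (hn : 2 * n < finrank K V) :
    ∃ v' : Fin (n + 1) ⊕ Fin (n + 1) → V, IsSymplecticFamily B v' := by
  set U := Submodule.span K (Set.range v)
  have hcompl : IsCompl U (B.orthogonal U) := hv.isCompl_span_orthogonal hB
  have hU : U ≠ ⊤ := by
    intro h
    have := finrank_range_le_card (R := K) v
    rw [Set.finrank, show Submodule.span K (Set.range v) = ⊤ from h, finrank_top,
      Fintype.card_sum, Fintype.card_fin] at this
    omega
  obtain ⟨x, hxU, hx⟩ := Submodule.exists_mem_ne_zero_of_ne_bot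
    fun h ↦ hU (eq_top_of_isCompl_bot (h ▸ hcompl))
  obtain ⟨y₀, hy₀⟩ : ∃ y, B x y ≠ 0 := by
    by_contra! h
    exact hx (hsep x h)
  obtain ⟨z, hz, y, hyU, rfl⟩ :=
    Submodule.mem_sup.1 (hcompl.sup_eq_top ▸ Submodule.mem_top (x := y₀))
  rw [map_add, hB.isRefl _ _ (hxU z hz), zero_add] at hy₀
  have hort {r : V} (hr : r ∈ B.orthogonal U) (s) : B (v s) r = 0 :=
    hr _ (Submodule.subset_span ⟨s, rfl⟩)
  refine ⟨Sum.elim (Fin.cons x (v ∘ Sum.inl)) (Fin.cons (-(B x y)⁻¹ • y) (v ∘ Sum.inr)), ?_⟩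
  have hvx := hort hxU
  have hvy := hort hyU
  have hxv s := hB.isRefl _ _ (hvx s)
  have hyv s := hB.isRefl _ _ (hvy s)
  have hyx : B y x = -B x y := (hB.neg_eq x y).symm
  rintro (s | s) (t | t)
  all_goals
    refine Fin.cases ?_ (fun i ↦ ?_) s <;> refine Fin.cases ?_ (fun j ↦ ?_) t <;>
    simp [J, hvx, hvy, hxv, hyv, hv _ _, hB x, hB y, hyx, hy₀, Matrix.one_apply,
      (Fin.succ_ne_zero _).symm]

theorem exists_of_two_mul_lt [FiniteDimensional K V] {B : BilinForm K V} (hB : B.IsAlt)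
    (hsep : B.SeparatingLeft) :
    ∀ n : ℕ, 2 * n < finrank K V + 2 → ∃ v : Fin n ⊕ Fin n → V, IsSymplecticFamily B v
  | 0, _ => ⟨0, isEmptyElim⟩
  | n + 1, hn => by
    obtain ⟨v, hv⟩ := exists_of_two_mul_lt hB hsep n (by omega)
    exact hv.exists_succ hB hsep (by omega)

end IsSymplecticFamily

theorem exists_symplectic_basis [FiniteDimensional K V] {B : BilinForm K V} (hB : B.IsAlt)
    (hsep : B.SeparatingLeft) :
    ∃ n, finrank K V = 2 * n ∧ ∃ c : Basis (Fin n ⊕ Fin n) K V, IsSymplecticFamily B c := by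
  obtain ⟨n, hn, hn'⟩ : ∃ n, 2 * n < finrank K V + 2 ∧ finrank K V ≤ 2 * n :=
    ⟨(finrank K V + 1) / 2, by omega, by omega⟩
  obtain ⟨v, hv⟩ := IsSymplecticFamily.exists_of_two_mul_lt hB hsep n hn
  have hcard : Fintype.card (Fin n ⊕ Fin n) = finrank K V := by
    have := hv.linearIndependent.fintype_card_le_finrank
    rw [Fintype.card_sum, Fintype.card_fin] at this ⊢
    omega
  refine ⟨n, ?_, basisOfLinearIndependentOfCardEqFinrank' _ hv.linearIndependent hcard, ?_⟩
  · rw [← hcard, Fintype.card_sum, Fintype.card_fin, two_mul]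
  · rwa [coe_basisOfLinearIndependentOfCardEqFinrank']

theorem exists_linearEquiv_isometry [FiniteDimensional K V] [FiniteDimensional K W]
    {B : BilinForm K V} {C : BilinForm K W} (hB : B.IsAlt) (hBsep : B.SeparatingLeft)
    (hC : C.IsAlt) (hCsep : C.SeparatingLeft) (h : finrank K V = finrank K W) :
    ∃ T : V ≃ₗ[K] W, ∀ x y, C (T x) (T y) = B x y := by
  obtain ⟨n, hn, b, hb⟩ := exists_symplectic_basis hB hBsep
  obtain ⟨m, hm, c, hc⟩ := exists_symplectic_basis hC hCsep
  obtain rfl : n = m := by omega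
  let T := b.equiv c (Equiv.refl _)
  suffices C.compl₁₂ T.toLinearMap T.toLinearMap = B from
    ⟨T, fun x y ↦ LinearMap.congr_fun₂ this x y⟩
  refine LinearMap.BilinForm.ext_basis b fun s t ↦ ?_
  simp [T, hb s t, hc s t]

/-- The wedge product `σ ∧ τ` of two two-forms, as a plain function of its four arguments. -/
def twoFormWedge (σ τ : BilinForm K V) (w x y z : V) : K :=
  σ w x * τ y z - σ w y * τ x z + σ w z * τ x y + σ y z * τ w x - σ x z * τ w y + σ x y * τ w z

theorem apply_eq_of_twoFormWedge_eq_zero [DecidableEq ι] {σ ω : BilinForm K V} {v : ι ⊕ ι → V}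
    (hv : IsSymplecticFamily ω v) (h : ∀ w x y z, twoFormWedge σ ω w x y z = 0)
    {s t : ι ⊕ ι} {k : ι} (hs : k ≠ s.elim id id) (ht : k ≠ t.elim id id) :
    σ (v s) (v t) = J ι K s t * σ (v (.inl k)) (v (.inr k)) := by
  have hJ {r : ι ⊕ ι} (hr : k ≠ r.elim id id) : J ι K r (.inl k) = 0 ∧ J ι K r (.inr k) = 0 := by
    cases r <;> simp_all [J, one_apply, eq_comm]
  have hkk : J ι K (.inl k) (.inr k) = -1 := by simp [J]
  have hwedge := h (v s) (v t) (v (.inl k)) (v (.inr k))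
  simp only [twoFormWedge, hv _ _, hJ hs, hJ ht, hkk] at hwedge
  linear_combination -hwedge

theorem eq_zero_of_twoFormWedge_eq_zero [NeZero (2 : K)] [FiniteDimensional K V]
    {σ ω : BilinForm K V} (hω : ω.IsAlt) (hsep : ω.SeparatingLeft) (hV : 4 < finrank K V)
    (h : ∀ w x y z, twoFormWedge σ ω w x y z = 0) : σ = 0 := by
  obtain ⟨n, hn, c, hc⟩ := exists_symplectic_basis hω hsep
  have hexists (i j : Fin n) : ∃ k, k ≠ i ∧ k ≠ j := by
    obtain ⟨k, -, hk⟩ := Finset.exists_mem_notMem_of_card_lt_card (s := {i, j}) (t := Finset.univ)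
      (Finset.card_le_two.trans_lt <| by rw [Finset.card_univ, Fintype.card_fin]; omega)
    exact ⟨k, by simpa using hk⟩
  have hpair {i k : Fin n} (hik : k ≠ i) :
      σ (c (.inl i)) (c (.inr i)) = -σ (c (.inl k)) (c (.inr k)) := by
    simpa [J] using apply_eq_of_twoFormWedge_eq_zero hc h (s := .inl i) (t := .inr i) hik hik
  have hzero (i : Fin n) : σ (c (.inl i)) (c (.inr i)) = 0 := by
    obtain ⟨j, hji, -⟩ := hexists i i
    obtain ⟨k, hki, hkj⟩ := hexists i j
    refine (mul_eq_zero.1 ?_).resolve_left (NeZero.ne (2 : K))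
    linear_combination hpair hji - hpair hkj + hpair hki
  refine LinearMap.BilinForm.ext_basis c fun s t ↦ ?_
  obtain ⟨k, hks, hkt⟩ := hexists (s.elim id id) (t.elim id id)
  rw [apply_eq_of_twoFormWedge_eq_zero hc h hks hkt, hzero, mul_zero, LinearMap.zero_apply,
    LinearMap.zero_apply]

/-- The derivative `(x, y) ↦ ω (D x) y + ω x (D y)` of a bilinear form along `D`; it vanishes
exactly when `D ∈ sp(ω)`. -/
def twoFormDeriv (D : V →ₗ[K] V) (ω : BilinForm K V) : BilinForm K V :=
  ω ∘ₗ D + ω.compl₂ D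

theorem twoFormDeriv_apply (D : V →ₗ[K] V) (ω : BilinForm K V) (x y : V) :
    twoFormDeriv D ω x y = ω (D x) y + ω x (D y) :=
  rfl

theorem twoFormDeriv_isAlt (D : V →ₗ[K] V) {ω : BilinForm K V} (hω : ω.IsAlt) :
    (twoFormDeriv D ω).IsAlt := fun x ↦ by
  rw [twoFormDeriv_apply, ← hω.neg_eq, neg_add_cancel]

theorem restrict_twoFormDeriv {D : V →ₗ[K] V} {U : Submodule K V} {A : U →ₗ[K] U}
    (hA : ∀ x : U, (A x : V) = D x) (ω : BilinForm K V) :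
    (twoFormDeriv D ω).restrict U = twoFormDeriv A (ω.restrict U) := by
  ext x y
  simp [twoFormDeriv_apply, hA]

theorem exists_conj_skew_iff [FiniteDimensional K V] {ω : BilinForm K V} (hω : ω.IsAlt)
    (hsep : ω.SeparatingLeft) (A : V →ₗ[K] V) :
    (∃ T : V ≃ₗ[K] V, twoFormDeriv (T.toLinearMap ∘ₗ A ∘ₗ T.symm.toLinearMap) ω = 0) ↔
      ∃ τ : BilinForm K V, τ.IsAlt ∧ τ.SeparatingLeft ∧ twoFormDeriv A τ = 0 := by
  constructor
  · rintro ⟨T, hT⟩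
    refine ⟨ω.compl₁₂ T.toLinearMap T.toLinearMap, fun x ↦ hω (T x), fun x hx ↦ ?_, ?_⟩
    · refine T.map_eq_zero_iff.1 <| hsep _ fun y ↦ ?_
      simpa using hx (T.symm y)
    · ext x y
      simpa [twoFormDeriv_apply] using LinearMap.congr_fun₂ hT (T x) (T y)
  · rintro ⟨τ, hτ, hτsep, h⟩
    obtain ⟨T, hT⟩ := exists_linearEquiv_isometry hτ hτsep hω hsep rfl
    refine ⟨T, ?_⟩
    ext x y
    have := LinearMap.congr_fun₂ h (T.symm x) (T.symm y)
    rwa [twoFormDeriv_apply, ← hT, ← hT, T.apply_symm_apply, T.apply_symm_apply] at this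

end Symplectic

/-! ### Four-forms on almost abelian Lie algebras -/

section FourForm

variable {K V : Type*} [Field K] [AddCommGroup V] [Module K V]

theorem wedgeCov_four_apply (p q r s : Dual K V) (w x y z : V) :
    wedgeCov 4 ![p, q, r, s] ![w, x, y, z] =
      p w * det !![q x, r x, s x; q y, r y, s y; q z, r z, s z] -
        q w * det !![p x, r x, s x; p y, r y, s y; p z, r z, s z] +
        r w * det !![p x, q x, s x; p y, q y, s y; p z, q z, s z] -
        s w * det !![p x, q x, r x; p y, q y, r y; p z, q z, r z] := by
  have hdet : wedgeCov 4 ![p, q, r, s] ![w, x, y, z] =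
      det !![p w, q w, r w, s w; p x, q x, r x, s x; p y, q y, r y, s y; p z, q z, r z, s z] := by
    unfold wedgeCov
    rw [AlternatingMap.compLinearMap_apply]
    refine congrArg det ?_
    ext i j
    fin_cases i <;> fin_cases j <;> rfl
  rw [hdet, det_succ_row_zero]
  simp [Fin.sum_univ_succ, Fin.succAbove, det_fin_three]
  ring

theorem ceDiff_three_apply {g : Type*} [LieRing g] [LieAlgebra K g] (ρ : (Fin 4 → g) → K)
    (x₀ x₁ x₂ x₃ x₄ : g) :
    ceDiff 3 ρ ![x₀, x₁, x₂, x₃, x₄] =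
      -ρ ![⁅x₀, x₁⁆, x₂, x₃, x₄] + ρ ![⁅x₀, x₂⁆, x₁, x₃, x₄] - ρ ![⁅x₀, x₃⁆, x₁, x₂, x₄] +
        ρ ![⁅x₀, x₄⁆, x₁, x₂, x₃] - ρ ![⁅x₁, x₂⁆, x₀, x₃, x₄] + ρ ![⁅x₁, x₃⁆, x₀, x₂, x₄] -
        ρ ![⁅x₁, x₄⁆, x₀, x₂, x₃] - ρ ![⁅x₂, x₃⁆, x₀, x₁, x₄] + ρ ![⁅x₂, x₄⁆, x₀, x₁, x₃] -
        ρ ![⁅x₃, x₄⁆, x₀, x₁, x₂] := by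
  have hcons (a : g) (f : Fin 3 → g) : (Fin.cons a f : Fin 4 → g) = ![a, f 0, f 1, f 2] := by
    ext l
    fin_cases l <;> rfl
  simp only [ceDiff, hcons, Fin.sum_univ_succ, Fin.sum_univ_zero]
  simp [Fin.succAbove, Fin.lt_def]
  ring

/-- The derivative of a four-form along `D`, namely `Ψ(D w,x,y,z) + ⋯ + Ψ(w,x,y,D z)`, with the
argument hit by `D` moved to the front. -/
def fourFormDeriv (D : V →ₗ[K] V) (Ψ : V [⋀^Fin 4]→ₗ[K] K) (w x y z : V) : K :=
  Ψ ![D w, x, y, z] - Ψ ![D x, w, y, z] + Ψ ![D y, w, x, z] - Ψ ![D z, w, x, y]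

theorem ceDiff_three_apply_of_lie_eq {g : Type*} [LieRing g] [LieAlgebra K g] {α : Dual K g}
    {D : g →ₗ[K] g} (hlie : ∀ x y : g, ⁅x, y⁆ = α x • D y - α y • D x)
    (Ψ : g [⋀^Fin 4]→ₗ[K] K) (x₀ x₁ x₂ x₃ x₄ : g) :
    ceDiff 3 Ψ ![x₀, x₁, x₂, x₃, x₄] =
      -(α x₀ * fourFormDeriv D Ψ x₁ x₂ x₃ x₄ - α x₁ * fourFormDeriv D Ψ x₀ x₂ x₃ x₄ +
        α x₂ * fourFormDeriv D Ψ x₀ x₁ x₃ x₄ - α x₃ * fourFormDeriv D Ψ x₀ x₁ x₂ x₄ +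
        α x₄ * fourFormDeriv D Ψ x₀ x₁ x₂ x₃) := by
  have hΨ (a b : K) (p q x y z : g) :
      Ψ ![a • p - b • q, x, y, z] = a * Ψ ![p, x, y, z] - b * Ψ ![q, x, y, z] := by
    rw [sub_eq_add_neg, ← neg_smul, Ψ.map_vecCons_add, Ψ.map_vecCons_smul, Ψ.map_vecCons_smul]
    simp only [smul_eq_mul]
    ring
  simp only [ceDiff_three_apply, hlie, hΨ, fourFormDeriv]
  ring

theorem exists_eq_wedge_of_restrict_ker_eq_zero {σ : BilinForm K V} (hσ : σ.IsAlt)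
    {α : Dual K V} {s : V} (hs : α s ≠ 0) (h : σ.restrict (LinearMap.ker α) = 0) :
    ∃ β : Dual K V, ∀ x y, σ x y = α x * β y - α y * β x := by
  refine ⟨(α s)⁻¹ • σ s, fun x y ↦ ?_⟩
  have hmem (x : V) : x - (α x * (α s)⁻¹) • s ∈ LinearMap.ker α := by simp [hs]
  have hzero : σ (x - (α x * (α s)⁻¹) • s) (y - (α y * (α s)⁻¹) • s) = 0 :=
    LinearMap.congr_fun₂ h ⟨_, hmem x⟩ ⟨_, hmem y⟩
  simp only [map_sub, map_smul, LinearMap.sub_apply, LinearMap.smul_apply, smul_eq_mul,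
    hσ.self_eq_zero, ← hσ.neg_eq s x] at hzero ⊢
  linear_combination hzero

theorem exists_dual_apply_eq_one_ker_eq [FiniteDimensional K V] {U : Submodule K V} {v : V}
    (hv : v ∉ U) (hU : finrank K U + 1 = finrank K V) :
    ∃ α : Dual K V, α v = 1 ∧ LinearMap.ker α = U := by
  obtain ⟨f, hfv, hf⟩ := Submodule.exists_dual_map_eq_bot_of_notMem hv inferInstance
  refine ⟨(f v)⁻¹ • f, by simp [hfv], ?_⟩
  rw [LinearMap.ker_smul _ _ (inv_ne_zero hfv)]
  refine (Submodule.eq_of_le_of_finrank_eq (LinearMap.le_ker_iff_map.2 hf) ?_).symm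
  have := Module.Dual.finrank_ker_add_one_of_ne_zero (f := f) (by rintro rfl; exact hfv rfl)
  omega

theorem exists_dualBasis_eq {ι : Type*} [Finite ι] [DecidableEq ι] [FiniteDimensional K V]
    (b : Basis ι K (Dual K V)) : ∃ e : Basis ι K V, e.dualBasis = b := by
  let e : Basis ι K V := b.dualBasis.map (evalEquiv K V).symm
  refine ⟨e, Basis.eq_of_apply_eq fun i ↦ e.ext fun j ↦ ?_⟩
  rw [Basis.dualBasis_apply_self, Basis.map_apply, apply_evalEquiv_symm_apply,
    Basis.dualBasis_apply_self]
  exact if_congr eq_comm rfl rfl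

theorem lie_eq_smul_sub_smul {g : Type*} [LieRing g] [LieAlgebra K g] {α : Dual K g} {v : g}
    (hv : α v = 1) (habel : ∀ x ∈ LinearMap.ker α, ∀ y ∈ LinearMap.ker α, ⁅x, y⁆ = 0) (x y : g) :
    ⁅x, y⁆ = α x • ⁅v, y⁆ - α y • ⁅v, x⁆ := by
  have hmem (x : g) : x - α x • v ∈ LinearMap.ker α := by simp [hv]
  have h := habel _ (hmem x) _ (hmem y)
  simp only [sub_lie, lie_sub, smul_lie, lie_smul, lie_self, smul_zero, sub_zero] at h
  rw [← sub_eq_zero, ← h, ← lie_skew v x]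
  module

theorem lie_mem_of_ker_eq {g : Type*} [LieRing g] [LieAlgebra K g] {α : Dual K g} {v : g}
    (hv : α v = 1) {u : LieIdeal K g} (hu : LinearMap.ker α = u.toSubmodule) (x : g) :
    ⁅v, x⁆ ∈ u := by
  have hmem : x - α x • v ∈ u.toSubmodule := hu ▸ LinearMap.mem_ker.2 (by simp [hv])
  simpa only [lie_sub, lie_smul, lie_self, smul_zero, sub_zero] using lie_mem_right K g u v _ hmem

end FourForm

/-! ### The `G₂` four-form and its contractions -/

section G2

variable {K V : Type*} [Field K] [AddCommGroup V] [Module K V]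

section Sharp

variable {ι : Type*} [Fintype ι]

/-- The vector `α♯` dual to `α` for the inner product in which `e` is orthonormal. -/
noncomputable def basisSharp (e : Basis ι K V) (α : Dual K V) : V :=
  ∑ i, α (e i) • e i

theorem dual_apply_eq_dotProduct (e : Basis ι K V) (α : Dual K V) (x : V) :
    α x = (fun i ↦ α (e i)) ⬝ᵥ e.repr x := by
  conv_lhs => rw [← e.sum_repr x, map_sum]
  simp [-Basis.sum_repr, dotProduct, mul_comm]

theorem repr_basisSharp (e : Basis ι K V) (α : Dual K V) :
    ⇑(e.repr (basisSharp e α)) = fun i ↦ α (e i) :=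
  e.repr_sum_self _

theorem dual_basisSharp (e : Basis ι K V) (α : Dual K V) :
    α (basisSharp e α) = (fun i ↦ α (e i)) ⬝ᵥ fun i ↦ α (e i) := by
  rw [dual_apply_eq_dotProduct e, repr_basisSharp]

theorem dual_basisSharp_ne_zero [LinearOrder K] [IsStrictOrderedRing K] (e : Basis ι K V)
    {α : Dual K V} (hα : α ≠ 0) : α (basisSharp e α) ≠ 0 := by
  rw [dual_basisSharp, Ne, dotProduct_self_eq_zero]
  exact fun h ↦ hα <| e.ext fun i ↦ congrFun h i

end Sharp

/-- The matrix of the two-form `ι_a φ`, where `a` is read as a vector and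
`φ = f¹²⁷ + f³⁴⁷ + f⁵⁶⁷ + f¹³⁵ - f¹⁴⁶ - f²³⁶ - f²⁴⁵` is the three-form whose Hodge dual is
`stdG2`. -/
def g2Matrix (a : Fin 7 → K) : Matrix (Fin 7) (Fin 7) K :=
  !![0, a 6, a 4, -a 5, -a 2, a 3, -a 1;
    -a 6, 0, -a 5, -a 4, a 3, a 2, a 0;
    -a 4, a 5, 0, a 6, a 0, -a 1, -a 3;
    a 5, a 4, -a 6, 0, -a 1, -a 0, a 2;
    a 2, -a 3, -a 0, a 1, 0, a 6, -a 5;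
    -a 3, -a 2, a 1, a 0, -a 6, 0, a 4;
    a 1, -a 0, a 3, -a 2, a 5, -a 4, 0]

theorem g2Matrix_transpose (a : Fin 7 → K) : (g2Matrix a)ᵀ = -g2Matrix a := by
  ext i j
  fin_cases i <;> fin_cases j <;> simp [g2Matrix]

theorem g2Matrix_mulVec_self (a : Fin 7 → K) : g2Matrix a *ᵥ a = 0 := by
  ext i
  fin_cases i <;> simp [g2Matrix, mulVec, dotProduct, Fin.sum_univ_seven] <;> ring

theorem g2Matrix_mul_self (a : Fin 7 → K) :
    g2Matrix a * g2Matrix a = vecMulVec a a - (a ⬝ᵥ a) • 1 := by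
  ext i j
  fin_cases i <;> fin_cases j <;>
    simp [g2Matrix, mul_apply, vecMulVec_apply, dotProduct, Fin.sum_univ_seven] <;> ring

/-- The two-form `ι_{α♯} φ` on `V`, with `φ` the three-form of `g2Matrix` in the basis dual to `e`
and `α♯ = basisSharp e α`. -/
noncomputable def g2TwoForm (e : Basis (Fin 7) K V) (α : Dual K V) : BilinForm K V :=
  Matrix.toBilin e (g2Matrix fun i ↦ α (e i))

theorem g2TwoForm_apply (e : Basis (Fin 7) K V) (α : Dual K V) (x y : V) :
    g2TwoForm e α x y = e.repr x ⬝ᵥ g2Matrix (fun i ↦ α (e i)) *ᵥ e.repr y := by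
  simp [g2TwoForm, toBilin_apply, dotProduct, mulVec, Finset.mul_sum, mul_assoc]

theorem g2TwoForm_isAlt (e : Basis (Fin 7) K V) (α : Dual K V) : (g2TwoForm e α).IsAlt := by
  intro x
  simp [g2TwoForm_apply, g2Matrix, mulVec, dotProduct, Fin.sum_univ_seven]
  ring

set_option maxHeartbeats 1000000 in
-- `ring` checks an identity of degree six in 35 variables.
theorem dual_basisSharp_mul_stdG2 (e : Basis (Fin 7) K V) (α : Dual K V) (w x y z : V) :
    α (basisSharp e α) * stdG2 e.dualBasis ![w, x, y, z] =
      g2TwoForm e α w x * g2TwoForm e α y z - g2TwoForm e α w y * g2TwoForm e α x z +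
        g2TwoForm e α w z * g2TwoForm e α x y +
      α w * stdG2 e.dualBasis ![basisSharp e α, x, y, z] -
      α x * stdG2 e.dualBasis ![basisSharp e α, w, y, z] +
      α y * stdG2 e.dualBasis ![basisSharp e α, w, x, z] -
      α z * stdG2 e.dualBasis ![basisSharp e α, w, x, y] := by
  have hα := dual_apply_eq_dotProduct e α
  simp only [hα w, hα x, hα y, hα z, hα (basisSharp e α), g2TwoForm_apply, stdG2, bw,
    wedgeCov_four_apply, AlternatingMap.add_apply, AlternatingMap.sub_apply, repr_basisSharp,
    Basis.coe_dualBasis, Basis.coord_apply]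
  generalize ⇑(e.repr w) = w, ⇑(e.repr x) = x, ⇑(e.repr y) = y, ⇑(e.repr z) = z
  simp only [det_fin_three, mulVec, dotProduct, Fin.sum_univ_seven, g2Matrix, of_apply, cons_val]
  ring

theorem eq_zero_of_g2TwoForm_eq_zero {e : Basis (Fin 7) K V} {α : Dual K V}
    (hα : α (basisSharp e α) ≠ 0) {x : V} (hx : α x = 0)
    (h : ∀ y, α y = 0 → g2TwoForm e α x y = 0) : x = 0 := by
  set a : Fin 7 → K := fun i ↦ α (e i)
  refine e.repr.map_eq_zero_iff.1 <| DFunLike.coe_injective <| dotProduct_eq_zero _ fun w ↦ ?_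
  set y : V := e.equivFun.symm (g2Matrix a *ᵥ w)
  have hyrepr : ⇑(e.repr y) = g2Matrix a *ᵥ w := e.equivFun.apply_symm_apply _
  have hy : α y = 0 := by
    rw [dual_apply_eq_dotProduct e, hyrepr, dotProduct_mulVec, ← mulVec_transpose,
      g2Matrix_transpose, neg_mulVec, g2Matrix_mulVec_self, neg_zero, zero_dotProduct]
  have hxy : α (basisSharp e α) * (e.repr x ⬝ᵥ w) = 0 := by
    have hax : e.repr x ⬝ᵥ a = 0 := by rw [dotProduct_comm, ← dual_apply_eq_dotProduct e, hx]
    have := h y hy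
    rw [g2TwoForm_apply, hyrepr, mulVec_mulVec, g2Matrix_mul_self, sub_mulVec, smul_mulVec,
      one_mulVec, dotProduct_sub, dotProduct_smul, vecMulVec_mulVec, dotProduct_smul,
      hax, ← dual_basisSharp] at this
    simpa using this
  exact (mul_eq_zero.1 hxy).resolve_left hα

theorem exists_dual_basisSharp_mul_fourFormDeriv_eq (e : Basis (Fin 7) K V) {α : Dual K V}
    {D : V →ₗ[K] V} (hD : ∀ x, α (D x) = 0) :
    ∃ ρ : V → V → V → K, ∀ w x y z,
      α (basisSharp e α) * fourFormDeriv D (stdG2 e.dualBasis) w x y z =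
        twoFormWedge (twoFormDeriv D (g2TwoForm e α)) (g2TwoForm e α) w x y z +
          (α w * ρ x y z - α x * ρ w y z + α y * ρ w x z - α z * ρ w x y) := by
  let ρ (x y z : V) : K := stdG2 e.dualBasis ![basisSharp e α, D x, y, z] -
    stdG2 e.dualBasis ![basisSharp e α, D y, x, z] + stdG2 e.dualBasis ![basisSharp e α, D z, x, y]
  refine ⟨ρ, fun w x y z ↦ ?_⟩
  have hneg (x y : V) : g2TwoForm e α x (D y) = -g2TwoForm e α (D y) x :=
    ((g2TwoForm_isAlt e α).neg_eq (D y) x).symm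
  have h := dual_basisSharp_mul_stdG2 e α
  simp only [fourFormDeriv, twoFormWedge, twoFormDeriv_apply, hneg, ρ]
  linear_combination (norm := (simp only [hD]; ring))
    h (D w) x y z - h (D x) w y z + h (D y) w x z - h (D z) w x y

theorem restrict_g2TwoForm_separatingLeft {e : Basis (Fin 7) K V} {α : Dual K V}
    (hα : α (basisSharp e α) ≠ 0) {U : Submodule K V} (hU : LinearMap.ker α = U) :
    ((g2TwoForm e α).restrict U).SeparatingLeft := by
  subst hU
  exact fun x hx ↦ Subtype.ext <| eq_zero_of_g2TwoForm_eq_zero hα x.2 fun y hy ↦ hx ⟨y, hy⟩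

theorem exists_basis_restrict_g2TwoForm_eq {α : Dual K V} {v : V} (hv : α v = 1)
    {U : Submodule K V} (hU : LinearMap.ker α = U) (hdim : finrank K U = 6) {τ : BilinForm K U}
    (hτ : τ.IsAlt) (hsep : τ.SeparatingLeft) :
    ∃ e : Basis (Fin 7) K V, α (basisSharp e α) = 1 ∧ (g2TwoForm e α).restrict U = τ := by
  subst hU
  have : FiniteDimensional K (LinearMap.ker α) := Module.finite_of_finrank_pos (by omega)
  obtain ⟨n, hn, c, hc⟩ := exists_symplectic_basis hτ hsep
  obtain rfl : n = 3 := by omega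
  -- `J` takes the value `-1` on `(inl i, inr i)`, but `ι_{e₇} φ = f¹² + f³⁴ + f⁵⁶`.
  let p : Fin 6 ≃ Fin 3 ⊕ Fin 3 :=
    Equiv.ofBijective ![.inr 0, .inl 0, .inr 1, .inl 1, .inr 2, .inl 2] (by decide)
  let c₆ := c.reindex p.symm
  let e : Basis (Fin 7) K V := Basis.mkFinSnoc c₆ v
    (fun a x hx h ↦ by simpa [hv, LinearMap.mem_ker.1 hx] using congrArg α h)
    fun x ↦ ⟨-α x, by simp [hv]⟩
  have he (i : Fin 6) : e i.castSucc = c₆ i := by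
    rw [Basis.coe_mkFinSnoc, Fin.snoc_castSucc, Function.comp_apply]
  have he_last : e (Fin.last 6) = v := by
    rw [Basis.coe_mkFinSnoc, Fin.snoc_last]
  have hα : (fun i ↦ α (e i)) = Pi.single (Fin.last 6) 1 := by
    ext i
    cases i using Fin.lastCases with
    | last => rw [he_last, hv, Pi.single_eq_same]
    | cast i => rw [he, Pi.single_eq_of_ne i.castSucc_ne_last]; exact (c₆ i).2
  refine ⟨e, by rw [dual_basisSharp, hα, single_one_dotProduct, Pi.single_eq_same],
    LinearMap.BilinForm.ext_basis c₆ fun i j ↦ ?_⟩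
  have hlhs : (g2TwoForm e α).restrict (LinearMap.ker α) (c₆ i) (c₆ j) =
      g2Matrix (Pi.single (Fin.last 6) 1) i.castSucc j.castSucc := by
    change g2TwoForm e α (c₆ i) (c₆ j) = _
    rw [← he, ← he, g2TwoForm, hα, ← LinearMap.BilinForm.toMatrix_apply,
      LinearMap.BilinForm.toMatrix_toBilin]
  have hrhs : τ (c₆ i) (c₆ j) = J (Fin 3) K (p i) (p j) := by
    simp [c₆, hc _ _]
  rw [hlhs, hrhs]
  fin_cases i <;> fin_cases j <;> simp [p, J, g2Matrix]

end G2

/-! ### Closedness of the `G₂` four-form -/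

section Criterion

variable {K g : Type*} [Field K] [LieRing g] [LieAlgebra K g] {e : Basis (Fin 7) K g}
  {α : Dual K g} {D : g →ₗ[K] g}

theorem restrict_twoFormDeriv_eq_zero_of_ceDiff_eq_zero [NeZero (2 : K)]
    (hα : α (basisSharp e α) ≠ 0) (hD : ∀ x, α (D x) = 0)
    (hlie : ∀ x y : g, ⁅x, y⁆ = α x • D y - α y • D x) (h : ceDiff 3 (stdG2 e.dualBasis) = 0) :
    (twoFormDeriv D (g2TwoForm e α)).restrict (LinearMap.ker α) = 0 := by
  have := e.finiteDimensional_of_finite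
  have hα0 : α ≠ 0 := by
    rintro rfl
    exact hα rfl
  have hker : finrank K (LinearMap.ker α) = 6 := by
    have := Module.Dual.finrank_ker_add_one_of_ne_zero hα0
    rw [finrank_eq_card_basis e, Fintype.card_fin] at this
    omega
  refine eq_zero_of_twoFormWedge_eq_zero (ω := (g2TwoForm e α).restrict (LinearMap.ker α))
    (fun x ↦ g2TwoForm_isAlt e α x) (restrict_g2TwoForm_separatingLeft hα rfl) (by omega) ?_
  rintro ⟨w, hw : α w = 0⟩ ⟨x, hx : α x = 0⟩ ⟨y, hy : α y = 0⟩ ⟨z, hz : α z = 0⟩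
  obtain ⟨ρ, hρ⟩ := exists_dual_basisSharp_mul_fourFormDeriv_eq e hD
  have hd := congrFun h ![basisSharp e α, w, x, y, z]
  rw [ceDiff_three_apply_of_lie_eq hlie] at hd
  simp only [hw, hx, hy, hz, zero_mul, sub_zero, add_zero, hρ, Pi.zero_apply, neg_eq_zero] at hd
  exact hd

theorem ceDiff_eq_zero_of_restrict_twoFormDeriv_eq_zero (hα : α (basisSharp e α) ≠ 0)
    (hD : ∀ x, α (D x) = 0) (hlie : ∀ x y : g, ⁅x, y⁆ = α x • D y - α y • D x)
    (h : (twoFormDeriv D (g2TwoForm e α)).restrict (LinearMap.ker α) = 0) :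
    ceDiff 3 (stdG2 e.dualBasis) = 0 := by
  obtain ⟨β, hβ⟩ :=
    exists_eq_wedge_of_restrict_ker_eq_zero (twoFormDeriv_isAlt D (g2TwoForm_isAlt e α)) hα h
  obtain ⟨ρ, hρ⟩ := exists_dual_basisSharp_mul_fourFormDeriv_eq e hD
  ext v
  obtain ⟨x₀, x₁, x₂, x₃, x₄, rfl⟩ : ∃ x₀ x₁ x₂ x₃ x₄, v = ![x₀, x₁, x₂, x₃, x₄] :=
    ⟨v 0, v 1, v 2, v 3, v 4, by ext i; fin_cases i <;> rfl⟩
  refine (mul_eq_zero.1 ?_).resolve_left hα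
  rw [ceDiff_three_apply_of_lie_eq hlie]
  simp only [twoFormWedge, hβ] at hρ
  linear_combination -α x₀ * hρ x₁ x₂ x₃ x₄ + α x₁ * hρ x₀ x₂ x₃ x₄ - α x₂ * hρ x₀ x₁ x₃ x₄ +
    α x₃ * hρ x₀ x₁ x₂ x₄ - α x₄ * hρ x₀ x₁ x₂ x₃

theorem ceDiff_stdG2_eq_zero_iff [NeZero (2 : K)] (hα : α (basisSharp e α) ≠ 0)
    (hlie : ∀ x y : g, ⁅x, y⁆ = α x • D y - α y • D x) {U : Submodule K g}
    (hU : LinearMap.ker α = U) (hD : ∀ x, D x ∈ U) {A : U →ₗ[K] U}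
    (hA : ∀ x : U, (A x : g) = D x) :
    ceDiff 3 (stdG2 e.dualBasis) = 0 ↔ twoFormDeriv A ((g2TwoForm e α).restrict U) = 0 := by
  subst hU
  rw [← restrict_twoFormDeriv hA]
  exact ⟨restrict_twoFormDeriv_eq_zero_of_ceDiff_eq_zero hα hD hlie,
    ceDiff_eq_zero_of_restrict_twoFormDeriv_eq_zero hα hD hlie⟩

end Criterion

theorem stmt16_general {K g : Type*} [Field K] [LinearOrder K] [IsStrictOrderedRing K]
    [LieRing g] [LieAlgebra K g] (hg : finrank K g = 7)
    (u : LieIdeal K g) (habel : ∀ x ∈ u, ∀ y ∈ u, ⁅x, y⁆ = (0 : g))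
    (hu : finrank K ↥u = 6) (e₇ : g) (he : e₇ ∉ u)
    (ω : ↥u →ₗ[K] ↥u →ₗ[K] K) (halt : ∀ v : ↥u, ω v v = 0)
    (hnd : ∀ v : ↥u, (∀ w : ↥u, ω v w = 0) → v = 0)
    (adE : ↥u →ₗ[K] ↥u) (hadE : ∀ x : ↥u, (adE x : g) = ⁅e₇, (x : g)⁆) :
    (∃ Ψ : g [⋀^Fin 4]→ₗ[K] K, ceDiff 3 ⇑Ψ = 0 ∧
        ∃ b : Basis (Fin 7) K (Module.Dual K g), Ψ = stdG2 b) ↔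
      ∃ T : ↥u ≃ₗ[K] ↥u, ∀ v w : ↥u,
        ω ((T.toLinearMap ∘ₗ adE ∘ₗ T.symm.toLinearMap) v) w +
          ω v ((T.toLinearMap ∘ₗ adE ∘ₗ T.symm.toLinearMap) w) = 0 := by
  have : FiniteDimensional K g := Module.finite_of_finrank_pos (by omega)
  obtain ⟨α, hα, hker⟩ := exists_dual_apply_eq_one_ker_eq (U := u.toSubmodule) he
    (by rw [hg]; exact congrArg (· + 1) hu)
  have hlie := lie_eq_smul_sub_smul hα (hker ▸ habel)
  have hclosed {e : Basis (Fin 7) K g} (hne : α (basisSharp e α) ≠ 0) :=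
    ceDiff_stdG2_eq_zero_iff (D := LieAlgebra.ad K g e₇) hne hlie hker
      (lie_mem_of_ker_eq hα hker) hadE
  have hsimilar := exists_conj_skew_iff halt hnd adE
  simp only [LinearMap.BilinForm.ext_iff, twoFormDeriv_apply] at hsimilar
  refine Iff.trans ⟨?_, ?_⟩ hsimilar.symm
  · rintro ⟨_, hΨ, b, rfl⟩
    obtain ⟨e, rfl⟩ := exists_dualBasis_eq b
    have hne := dual_basisSharp_ne_zero e (α := α) (by rintro rfl; exact zero_ne_one hα)
    exact ⟨(g2TwoForm e α).restrict u.toSubmodule, fun x ↦ g2TwoForm_isAlt e α x,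
      restrict_g2TwoForm_separatingLeft hne hker,
      LinearMap.BilinForm.ext_iff.1 ((hclosed hne).1 hΨ)⟩
  · rintro ⟨τ, hτ, hsep, hskew⟩
    obtain ⟨e, he, rfl⟩ := exists_basis_restrict_g2TwoForm_eq hα hker hu hτ hsep
    exact ⟨_, (hclosed (he.trans_ne one_ne_zero)).2 (LinearMap.BilinForm.ext hskew), _, rfl⟩

/-- Let `g` be a seven-dimensional real Lie algebra with a
six-dimensional abelian ideal `u`, `e₇ ∈ g ∖ u`, and let `ω ∈ Λ²u*` be a nondegenerate
two-form on `u`.  Then `g` admits a cocalibrated `G₂`-structure (a closed four-form of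
the standard type `stdG2`) iff `ad(e₇)|_u` is similar under `GL(u)` to an element of
`sp(u,ω)`. -/
theorem stmt16 {g : Type*} [LieRing g] [LieAlgebra ℝ g] [FiniteDimensional ℝ g]
    (hg : finrank ℝ g = 7)
    (u : LieIdeal ℝ g) (habel : ∀ x ∈ u, ∀ y ∈ u, ⁅x, y⁆ = (0 : g))
    (hu : finrank ℝ ↥u = 6) (e₇ : g) (he : e₇ ∉ u)
    (ω : ↥u →ₗ[ℝ] ↥u →ₗ[ℝ] ℝ) (halt : ∀ v : ↥u, ω v v = 0)
    (hnd : ∀ v : ↥u, (∀ w : ↥u, ω v w = 0) → v = 0)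
    (adE : ↥u →ₗ[ℝ] ↥u) (hadE : ∀ x : ↥u, (adE x : g) = ⁅e₇, (x : g)⁆) :
    (∃ Ψ : g [⋀^Fin 4]→ₗ[ℝ] ℝ, ceDiff 3 ⇑Ψ = 0 ∧
        ∃ b : Basis (Fin 7) ℝ (Module.Dual ℝ g), Ψ = stdG2 b) ↔
      ∃ T : ↥u ≃ₗ[ℝ] ↥u, ∀ v w : ↥u,
        ω ((T.toLinearMap ∘ₗ adE ∘ₗ T.symm.toLinearMap) v) w +
          ω v ((T.toLinearMap ∘ₗ adE ∘ₗ T.symm.toLinearMap) w) = 0 :=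
  stmt16_general hg u habel hu e₇ he ω halt hnd adE hadE
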